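/- With unit weight $\omega \equiv 1$, the $l$-fold power fractional derivative admits the representation ${}^pD_{a,1}^{l[\alpha,\beta]} f(t) = \frac{1}{\chi(\alpha)^l} \sum_{q=0}^{\infty} \binom{q+l-1}{l-1} (-\mu_\alpha \ln p)^q \, {}^{RL}I_{a}^{\beta q + 1} f'(t)$, for $l \geq 1$ and $f$ smooth on $[a,b]$. -/

import Mathlib

open MeasureTheory

/-- The power Mittag–Leffler function (real version). -/
noncomputable def pE (p β s : ℝ) : ℝ :=
  ∑' n : ℕ, (s * Real.log p) ^ n / Real.Gamma (β * n + 1)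

/-- Weighted Riemann–Liouville fractional integral of order `β`. -/
noncomputable def RLI (a : ℝ) (ω : ℝ → ℝ) (β : ℝ) (f : ℝ → ℝ) (t : ℝ) : ℝ :=
  (1 / (Real.Gamma β * ω t)) * ∫ τ in a..t, (t - τ) ^ (β - 1) * (ω τ * f τ)

/-- The power fractional derivative (Caputo sense) with weight `ω`,
normalization value `Nα`, so `χ(α) = (1-α)/Nα` and `μ_α = α/(1-α)`. -/
noncomputable def pD (a : ℝ) (ω : ℝ → ℝ) (α β p Nα : ℝ) (f : ℝ → ℝ) (t : ℝ) : ℝ :=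
  (1 / (((1 - α) / Nα) * ω t)) *
    ∫ τ in a..t, pE p β (-(α / (1 - α)) * (t - τ) ^ β) * deriv (fun s => ω s * f s) τ

/-- The power fractional integral, `φ(α) = α/Nα`. -/
noncomputable def pI (a : ℝ) (ω : ℝ → ℝ) (α β p Nα : ℝ) (f : ℝ → ℝ) (t : ℝ) : ℝ :=
  ((1 - α) / Nα) * f t + Real.log p * (α / Nα) * RLI a ω β f t

/-!
On `C([a, b])` the Riemann–Liouville integrals `I^γ` are bounded operators with
`I^γ I^δ = I^(γ + δ)`. The growth of the Gamma function makes the Neumann series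
`R = ∑ (c I^β)^n`, `c = -μ_α log p`, converge absolutely for every `c`, and termwise integration of
the Mittag–Leffler kernel gives `pD f = χ⁻¹ I^1 R f'`. Hence `(pD f)' = χ⁻¹ R f'`, so the `l`-fold
iterate is `χ^(-l) I^1 R^l f'`, and the Cauchy product expands
`R^l = ∑ (q + l - 1).choose (l - 1) (c I^β)^q`.
-/

open Set

theorem exp_neg_mul_rpow_le_Gamma_add_one {X s : ℝ} (hX : 0 < X) (hs : 0 ≤ s) :
    Real.exp (-X) * X ^ s ≤ Real.Gamma (s + 1) := by
  have hint := Real.GammaIntegral_convergent (s := s + 1) (by linarith)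
  rw [Real.Gamma_eq_integral (by linarith), ← integral_exp_neg_Ioi, ← integral_mul_const]
  refine (setIntegral_mono_on ((integrableOn_exp_neg_Ioi X).mul_const _)
    (hint.mono_set (Ioi_subset_Ioi hX.le)) measurableSet_Ioi fun x hx => ?_).trans
    (setIntegral_mono_set hint ?_ (Ioi_subset_Ioi hX.le).eventuallyLE)
  · have : X ≤ x := le_of_lt hx
    rw [add_sub_cancel_right]
    gcongr
  · filter_upwards [ae_restrict_mem measurableSet_Ioi] with x hx
    have : 0 < x := hx
    simp only [Pi.zero_apply]
    positivity

theorem summable_pow_div_Gamma {β : ℝ} (hβ : 0 < β) (z : ℝ) :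
    Summable fun n : ℕ => z ^ n / Real.Gamma (β * n + 1) := by
  set Y : ℝ := 2 * (|z| + 1) with hY
  have hY0 : 0 < Y := by positivity
  have hX0 : 0 < Y ^ β⁻¹ := by positivity
  have hΓ (n : ℕ) : Real.exp (-Y ^ β⁻¹) * Y ^ n ≤ Real.Gamma (β * n + 1) := by
    have h := exp_neg_mul_rpow_le_Gamma_add_one hX0 (s := β * n) (by positivity)
    rwa [Real.rpow_mul hX0.le, Real.rpow_inv_rpow hY0.le hβ.ne', Real.rpow_natCast] at h
  refine .of_norm_bounded (summable_geometric_two.mul_left (Real.exp (Y ^ β⁻¹))) fun n => ?_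
  have hpos : 0 < Real.exp (-Y ^ β⁻¹) * Y ^ n := by positivity
  rw [norm_div, norm_pow, Real.norm_eq_abs, Real.norm_of_nonneg (hpos.le.trans (hΓ n))]
  calc |z| ^ n / Real.Gamma (β * n + 1)
      ≤ (|z| + 1) ^ n / (Real.exp (-Y ^ β⁻¹) * Y ^ n) := by
        gcongr
        · linarith
        · exact hΓ n
    _ = Real.exp (Y ^ β⁻¹) * (1 / 2) ^ n := by
        rw [Real.exp_neg, hY, mul_pow]
        field_simp
        rw [← mul_pow]
        norm_num

theorem integral_sub_rpow_mul_rpow {u v x : ℝ} (hu : 0 < u) (hv : 0 < v) (hx : 0 < x) :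
    ∫ s in (0 : ℝ)..x, (x - s) ^ (u - 1) * s ^ (v - 1) =
      x ^ (v + u - 1) * ProbabilityTheory.beta v u := by
  have hbeta : Complex.betaIntegral v u = (ProbabilityTheory.beta v u : ℂ) := by
    rw [ProbabilityTheory.beta, Complex.betaIntegral_eq_Gamma_mul_div _ _ (by simpa) (by simpa),
      ← Complex.ofReal_add]
    simp only [Complex.Gamma_ofReal, Complex.ofReal_mul, Complex.ofReal_div]
  have hint : ∫ s in (0 : ℝ)..x, (s : ℂ) ^ ((v : ℂ) - 1) * ((x : ℂ) - s) ^ ((u : ℂ) - 1) =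
      ((∫ s in (0 : ℝ)..x, (x - s) ^ (u - 1) * s ^ (v - 1) : ℝ) : ℂ) := by
    rw [← intervalIntegral.integral_ofReal]
    refine intervalIntegral.integral_congr fun s hs => ?_
    rw [uIcc_of_le hx.le] at hs
    push_cast [Complex.ofReal_cpow hs.1, Complex.ofReal_cpow (sub_nonneg.2 hs.2)]
    ring
  have h := Complex.betaIntegral_scaled v u hx
  rw [hint, hbeta] at h
  have hpow : (x : ℂ) ^ ((v : ℂ) + u - 1) = (x ^ (v + u - 1) : ℝ) := by
    push_cast [Complex.ofReal_cpow hx.le]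
    rfl
  rw [hpow] at h
  exact_mod_cast h

theorem summable_norm_and_tsum_choose_mul_pow {R : Type*} [NormedRing R] [CompleteSpace R] {x : R}
    (hx : Summable fun n : ℕ => ‖x ^ n‖) (l : ℕ) :
    (Summable fun n : ℕ => ‖((n + l).choose l : R) * x ^ n‖) ∧
      ∑' n : ℕ, ((n + l).choose l : R) * x ^ n = (∑' n : ℕ, x ^ n) ^ (l + 1) := by
  induction l with
  | zero => simpa using hx
  | succ l ih =>
    have hcoeff (n : ℕ) : ∑ ij ∈ Finset.HasAntidiagonal.antidiagonal n,
        x ^ ij.1 * (((ij.2 + l).choose l : R) * x ^ ij.2) =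
          ((n + (l + 1)).choose (l + 1) : R) * x ^ n := by
      rw [show n + (l + 1) = l + n + 1 by ring, ← Finset.sum_antidiagonal_choose_add,
        Nat.cast_sum, Finset.sum_mul]
      refine Finset.sum_congr rfl fun ij hij => ?_
      rw [← mul_assoc, ← Nat.cast_comm, mul_assoc, ← pow_add,
        Finset.HasAntidiagonal.mem_antidiagonal.1 hij, add_comm l]
    have hsum := summable_norm_sum_mul_antidiagonal_of_summable_norm hx ih.1
    have htsum := tsum_mul_tsum_eq_tsum_sum_antidiagonal_of_summable_norm hx ih.1
    simp only [hcoeff] at hsum htsum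
    exact ⟨hsum, by rw [← htsum, ih.2, ← pow_succ']⟩

theorem continuousLinearMap_ext_of_sub_pow {a b : ℝ} {E : Type*} [AddCommGroup E]
    [TopologicalSpace E] [Module ℝ E] [T2Space E] {A B : C(Icc a b, ℝ) →L[ℝ] E}
    (h : ∀ n : ℕ, A ⟨fun x => (x - a : ℝ) ^ n, by fun_prop⟩ =
      B ⟨fun x => (x - a : ℝ) ^ n, by fun_prop⟩) : A = B := by
  have hdense : Dense (polynomialFunctions (Icc a b) : Set C(Icc a b, ℝ)) := by
    rw [dense_iff_closure_eq, ← Subalgebra.topologicalClosure_coe,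
      polynomialFunctions_closure_eq_top, Algebra.coe_top]
  refine ContinuousLinearMap.coeFn_injective (A.continuous.ext_on hdense B.continuous ?_)
  rw [polynomialFunctions_coe]
  rintro _ ⟨p, rfl⟩
  have hp : Polynomial.toContinuousMapOnAlgHom (Icc a b) p =
      ∑ n ∈ (Polynomial.taylor a p).support, (Polynomial.taylor a p).coeff n •
        (⟨fun x => (x - a : ℝ) ^ n, by fun_prop⟩ : C(Icc a b, ℝ)) := by
    ext x
    conv_lhs => rw [← Polynomial.sum_taylor_eq p a]
    simp [Polynomial.sum]
  simp only [hp, map_sum, map_smul, h]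

section RiemannLiouville

variable {a t γ : ℝ} {f g : ℝ → ℝ}

theorem RLI_one_eq (a γ : ℝ) (f : ℝ → ℝ) (t : ℝ) :
    RLI a (fun _ => 1) γ f t =
      (Real.Gamma γ)⁻¹ * ∫ τ in a..t, (t - τ) ^ (γ - 1) * f τ := by
  simp only [RLI, mul_one, one_mul, one_div]

theorem RLI_one_one (a : ℝ) (f : ℝ → ℝ) (t : ℝ) :
    RLI a (fun _ => 1) 1 f t = ∫ τ in a..t, f τ := by
  simp [RLI_one_eq]

theorem RLI_one_congr (hat : a ≤ t) (h : EqOn f g (Icc a t)) :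
    RLI a (fun _ => 1) γ f t = RLI a (fun _ => 1) γ g t := by
  simp only [RLI_one_eq]
  congr 1
  refine intervalIntegral.integral_congr fun τ hτ => ?_
  rw [uIcc_of_le hat] at hτ
  simp only [h hτ]

theorem RLI_one_const_mul (a γ c : ℝ) (f : ℝ → ℝ) (t : ℝ) :
    RLI a (fun _ => 1) γ (fun s => c * f s) t = c * RLI a (fun _ => 1) γ f t := by
  simp only [RLI_one_eq, mul_left_comm _ c, intervalIntegral.integral_const_mul]

theorem intervalIntegrable_sub_rpow (hγ : 0 < γ) (a t : ℝ) :
    IntervalIntegrable (fun τ => (t - τ) ^ (γ - 1)) volume a t := by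
  have h : IntervalIntegrable (fun s : ℝ => s ^ (γ - 1)) volume (t - a) (t - t) :=
    intervalIntegral.intervalIntegrable_rpow' (by linarith)
  simpa using h.comp_sub_left t

theorem intervalIntegrable_sub_rpow_mul (hγ : 0 < γ) (hf : Continuous f) (a t : ℝ) :
    IntervalIntegrable (fun τ => (t - τ) ^ (γ - 1) * f τ) volume a t :=
  (intervalIntegrable_sub_rpow hγ a t).mul_continuousOn hf.continuousOn

theorem RLI_one_add (hγ : 0 < γ) (hf : Continuous f) (hg : Continuous g) (a t : ℝ) :
    RLI a (fun _ => 1) γ (fun s => f s + g s) t =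
      RLI a (fun _ => 1) γ f t + RLI a (fun _ => 1) γ g t := by
  simp only [RLI_one_eq, mul_add]
  rw [intervalIntegral.integral_add (intervalIntegrable_sub_rpow_mul hγ hf a t)
    (intervalIntegrable_sub_rpow_mul hγ hg a t), mul_add]

theorem norm_RLI_one_le {C : ℝ} (hγ : 0 < γ) (hat : a ≤ t) (hf : ∀ s ∈ Icc a t, ‖f s‖ ≤ C) :
    ‖RLI a (fun _ => 1) γ f t‖ ≤ (t - a) ^ γ / Real.Gamma (γ + 1) * C := by
  have hΓ : 0 < Real.Gamma γ := Real.Gamma_pos_of_pos hγ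
  have hkernel : ∫ τ in a..t, (t - τ) ^ (γ - 1) = (t - a) ^ γ / γ := by
    rw [intervalIntegral.integral_comp_sub_left (fun s : ℝ => s ^ (γ - 1)) t, sub_self,
      integral_rpow (.inl (by linarith)), sub_add_cancel, Real.zero_rpow hγ.ne', sub_zero]
  have hle : ‖∫ τ in a..t, (t - τ) ^ (γ - 1) * f τ‖ ≤ (t - a) ^ γ / γ * C := by
    rw [← hkernel, ← intervalIntegral.integral_mul_const]
    refine intervalIntegral.norm_integral_le_of_norm_le hat (.of_forall fun τ hτ => ?_)
      ((intervalIntegrable_sub_rpow hγ a t).mul_const C)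
    have hnn : 0 ≤ (t - τ) ^ (γ - 1) := Real.rpow_nonneg (sub_nonneg.2 hτ.2) _
    rw [norm_mul, Real.norm_of_nonneg hnn]
    exact mul_le_mul_of_nonneg_left (hf τ (Ioc_subset_Icc_self hτ)) hnn
  calc ‖RLI a (fun _ => 1) γ f t‖
      = (Real.Gamma γ)⁻¹ * ‖∫ τ in a..t, (t - τ) ^ (γ - 1) * f τ‖ := by
        rw [RLI_one_eq, norm_mul, Real.norm_of_nonneg (inv_nonneg.2 hΓ.le)]
    _ ≤ (Real.Gamma γ)⁻¹ * ((t - a) ^ γ / γ * C) := by gcongr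
    _ = (t - a) ^ γ / Real.Gamma (γ + 1) * C := by
        rw [Real.Gamma_add_one hγ.ne']
        field_simp

theorem RLI_one_sub_rpow {v : ℝ} (hγ : 0 < γ) (hv : 0 ≤ v) (hat : a ≤ t) :
    RLI a (fun _ => 1) γ (fun s => (s - a) ^ v) t =
      Real.Gamma (v + 1) / Real.Gamma (v + γ + 1) * (t - a) ^ (v + γ) := by
  rcases hat.eq_or_lt with rfl | hat
  · simp [RLI_one_eq, Real.zero_rpow (by positivity : v + γ ≠ 0)]
  have hshift := intervalIntegral.integral_comp_sub_right (a := a) (b := t)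
    (fun s => (t - a - s) ^ (γ - 1) * s ^ v) a
  have hbeta := integral_sub_rpow_mul_rpow hγ (by linarith : 0 < v + 1) (sub_pos.2 hat)
  simp only [add_sub_cancel_right, sub_sub_sub_cancel_right, sub_self] at hshift hbeta
  have hΓ : Real.Gamma γ ≠ 0 := (Real.Gamma_pos_of_pos hγ).ne'
  rw [RLI_one_eq, hshift, hbeta, ProbabilityTheory.beta, add_right_comm v 1, add_sub_cancel_right]
  field_simp

-- Rescaling the domain of integration to `[0, 1]` moves the dependence on the endpoint `t` from the
-- singular kernel to the function `f`, which makes dominated convergence applicable.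
theorem RLI_one_eq_integral_zero_one (hγ : 0 < γ) (hat : a ≤ t) (f : ℝ → ℝ) :
    RLI a (fun _ => 1) γ f t = (Real.Gamma γ)⁻¹ *
      ((t - a) ^ γ * ∫ u in (0 : ℝ)..1, (1 - u) ^ (γ - 1) * f (a + (t - a) * u)) := by
  rcases hat.eq_or_lt with rfl | hat
  · simp [RLI_one_eq, Real.zero_rpow hγ.ne']
  have hta : 0 < t - a := sub_pos.2 hat
  have hsubst := intervalIntegral.mul_integral_comp_mul_add (a := 0) (b := 1)
    (f := fun τ => (t - τ) ^ (γ - 1) * f τ) (t - a) a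
  simp only [mul_zero, zero_add, mul_one, sub_add_cancel] at hsubst
  rw [RLI_one_eq, ← hsubst, ← intervalIntegral.integral_const_mul (t - a),
    ← intervalIntegral.integral_const_mul ((t - a) ^ γ)]
  congr 1
  refine intervalIntegral.integral_congr fun u hu => ?_
  rw [uIcc_of_le zero_le_one] at hu
  have hpow : (t - ((t - a) * u + a)) ^ (γ - 1) = (t - a) ^ γ / (t - a) * (1 - u) ^ (γ - 1) := by
    rw [← Real.rpow_sub_one hta.ne', ← Real.mul_rpow hta.le (sub_nonneg.2 hu.2)]
    ring_nf
  simp only [hpow, add_comm a]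
  field_simp

theorem continuousOn_RLI_one {C : ℝ} (hγ : 0 < γ) (hf : Continuous f) (hC : ∀ s, ‖f s‖ ≤ C)
    (a : ℝ) : ContinuousOn (RLI a (fun _ => 1) γ f) (Ici a) := by
  have hint : Continuous fun t => ∫ u in (0 : ℝ)..1, (1 - u) ^ (γ - 1) * f (a + (t - a) * u) := by
    refine intervalIntegral.continuous_of_dominated_interval
      (bound := fun u => (1 - u) ^ (γ - 1) * C) (fun t => ?_) (fun t => .of_forall fun u hu => ?_)
      ((intervalIntegrable_sub_rpow hγ 0 1).mul_const C) (.of_forall fun u _ => by fun_prop)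
    · exact Measurable.aestronglyMeasurable (by fun_prop)
    · rw [uIoc_of_le zero_le_one] at hu
      have hnn : 0 ≤ (1 - u) ^ (γ - 1) := Real.rpow_nonneg (sub_nonneg.2 hu.2) _
      rw [norm_mul, Real.norm_of_nonneg hnn]
      exact mul_le_mul_of_nonneg_left (hC _) hnn
  have hpow : Continuous fun t : ℝ => (t - a) ^ γ :=
    (Real.continuous_rpow_const hγ.le).comp (by fun_prop)
  exact (continuous_const.mul (hpow.mul hint)).continuousOn.congr
    fun t ht => RLI_one_eq_integral_zero_one hγ ht f

end RiemannLiouville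

section BanachAlgebra

variable {A : Type*} [NormedRing A] [NormedAlgebra ℝ A] {x : A}

theorem summable_norm_smul_pow {β M : ℝ} (hβ : 0 < β)
    (hx : ∀ n : ℕ, ‖x ^ n‖ ≤ M ^ n / Real.Gamma (β * n + 1)) (c : ℝ) :
    Summable fun n : ℕ => ‖(c • x) ^ n‖ := by
  refine .of_nonneg_of_le (fun n => norm_nonneg _) (fun n => ?_)
    (summable_pow_div_Gamma hβ (‖c‖ * M))
  rw [smul_pow, norm_smul, norm_pow, mul_pow, mul_div_assoc]
  gcongr
  exact hx n

theorem hasSum_smul_mul_pow [CompleteSpace A] {c : ℝ}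
    (hx : Summable fun n : ℕ => ‖(c • x) ^ n‖) (y : A) (l : ℕ) :
    HasSum (fun n : ℕ => (((n + l).choose l : ℝ) * c ^ n) • (y * x ^ n))
      (y * (∑' n : ℕ, (c • x) ^ n) ^ (l + 1)) := by
  obtain ⟨hsum, htsum⟩ := summable_norm_and_tsum_choose_mul_pow hx l
  have hy := hsum.of_norm.hasSum.mul_left y
  rw [htsum] at hy
  refine hy.congr_fun fun n => ?_
  rw [mul_smul, ← mul_smul_comm, ← mul_smul_comm, ← smul_pow, Nat.cast_smul_eq_nsmul,
    nsmul_eq_mul]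

end BanachAlgebra

theorem sub_rpow_div_Gamma_nonneg {a b γ : ℝ} (hab : a ≤ b) (hγ : 0 < γ) :
    0 ≤ (b - a) ^ γ / Real.Gamma (γ + 1) :=
  div_nonneg (Real.rpow_nonneg (sub_nonneg.2 hab) γ) (Real.Gamma_nonneg_of_nonneg (by linarith))

section Operator

variable {a b β : ℝ} (hab : a ≤ b) (hβ : 0 < β)

theorem norm_RLI_one_IccExtend_le {γ : ℝ} (hγ : 0 < γ) (g : C(Icc a b, ℝ)) (t : Icc a b) :
    ‖RLI a (fun _ => 1) γ (g.IccExtend hab) t‖ ≤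
      (b - a) ^ γ / Real.Gamma (γ + 1) * ‖g‖ := by
  refine (norm_RLI_one_le hγ t.2.1 fun s _ =>
    g.norm_coe_le_norm (projIcc a b hab s)).trans ?_
  have hta : 0 ≤ (t : ℝ) - a := sub_nonneg.2 t.2.1
  gcongr
  exact t.2.2

/-- The Riemann–Liouville integral of order `γ > 0` with unit weight, as a bounded operator on
`C([a, b])` with the sup norm. The argument is extended by constants to all of `ℝ` before `RLI` is
applied to it; values outside `[a, b]` do not enter the integral. -/
noncomputable def rlIntegral {γ : ℝ} (hγ : 0 < γ) : C(Icc a b, ℝ) →L[ℝ] C(Icc a b, ℝ) :=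
  LinearMap.mkContinuous
    { toFun g := ⟨fun t => RLI a (fun _ => 1) γ (g.IccExtend hab) t,
        ((continuousOn_RLI_one hγ (g.IccExtend hab).continuous
          (fun s => g.norm_coe_le_norm (projIcc a b hab s)) a).mono
          Icc_subset_Ici_self).domRestrict⟩
      map_add' g h := ContinuousMap.ext fun t =>
        RLI_one_add hγ (g.IccExtend hab).continuous (h.IccExtend hab).continuous a t
      map_smul' c g := ContinuousMap.ext fun t =>
        RLI_one_const_mul a γ c (g.IccExtend hab) t }
    ((b - a) ^ γ / Real.Gamma (γ + 1)) fun g =>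
      (ContinuousMap.norm_le _
        (mul_nonneg (sub_rpow_div_Gamma_nonneg hab hγ) (norm_nonneg g))).2
        (norm_RLI_one_IccExtend_le hab hγ g)

variable {γ δ : ℝ} (hγ : 0 < γ) (hδ : 0 < δ)

theorem rlIntegral_apply (g : C(Icc a b, ℝ)) (t : Icc a b) :
    rlIntegral hab hγ g t = RLI a (fun _ => 1) γ (g.IccExtend hab) t :=
  rfl

theorem norm_rlIntegral_le : ‖rlIntegral hab hγ‖ ≤ (b - a) ^ γ / Real.Gamma (γ + 1) :=
  LinearMap.mkContinuous_norm_le _ (sub_rpow_div_Gamma_nonneg hab hγ) _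

theorem rlIntegral_apply_of_eq_rpow {g : C(Icc a b, ℝ)} {c v : ℝ} (hv : 0 ≤ v)
    (hg : ∀ s : Icc a b, g s = c * (s - a : ℝ) ^ v) (t : Icc a b) :
    rlIntegral hab hγ g t =
      c * (Real.Gamma (v + 1) / Real.Gamma (v + γ + 1)) * (t - a : ℝ) ^ (v + γ) := by
  have hEq : EqOn (g.IccExtend hab) (fun s => c * (s - a) ^ v) (Icc a t) := fun s hs => by
    have hs' : s ∈ Icc a b := ⟨hs.1, hs.2.trans t.2.2⟩
    rw [ContinuousMap.coe_IccExtend, IccExtend_of_mem hab g hs', hg]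
  rw [rlIntegral_apply, RLI_one_congr t.2.1 hEq, RLI_one_const_mul, RLI_one_sub_rpow hγ hv t.2.1,
    mul_assoc]

-- Bounded operators that agree on monomials are equal, so the beta integral replaces the usual
-- exchange of the order of integration.
theorem rlIntegral_mul_rlIntegral :
    rlIntegral hab hγ * rlIntegral hab hδ = rlIntegral hab (add_pos hδ hγ) := by
  refine continuousLinearMap_ext_of_sub_pow fun n => ContinuousMap.ext fun t => ?_
  have hn : (0 : ℝ) ≤ n := n.cast_nonneg
  have hmono (s : Icc a b) : (s - a : ℝ) ^ n = 1 * (s - a : ℝ) ^ (n : ℝ) := by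
    rw [one_mul, Real.rpow_natCast]
  have hΓ : Real.Gamma (n + δ + 1) ≠ 0 := (Real.Gamma_pos_of_pos (by positivity)).ne'
  rw [mul_apply_eq_comp,
    rlIntegral_apply_of_eq_rpow hab hγ (by positivity)
      (rlIntegral_apply_of_eq_rpow hab hδ hn hmono),
    rlIntegral_apply_of_eq_rpow hab _ hn hmono, ← add_assoc]
  field_simp

theorem rlIntegral_pow_succ (n : ℕ) :
    rlIntegral hab hβ ^ (n + 1) = rlIntegral hab (γ := β * (n + 1 : ℕ)) (by positivity) := by
  induction n with
  | zero => simp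
  | succ n ih =>
    rw [pow_succ, ih, rlIntegral_mul_rlIntegral]
    congr 1
    push_cast
    ring

theorem rlIntegral_mul_pow (n : ℕ) :
    rlIntegral hab hγ * rlIntegral hab hβ ^ n =
      rlIntegral hab (γ := β * n + γ) (by positivity) := by
  cases n with
  | zero => simp
  | succ n => rw [rlIntegral_pow_succ, rlIntegral_mul_rlIntegral]

theorem norm_rlIntegral_pow_le (n : ℕ) :
    ‖rlIntegral hab hβ ^ n‖ ≤ ((b - a) ^ β) ^ n / Real.Gamma (β * n + 1) := by
  cases n with
  | zero =>
    simpa [ContinuousLinearMap.one_def] using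
      ContinuousLinearMap.norm_id_le (𝕜 := ℝ) (E := C(Icc a b, ℝ))
  | succ n =>
    rw [rlIntegral_pow_succ, ← Real.rpow_mul_natCast (sub_nonneg.2 hab)]
    exact norm_rlIntegral_le hab _

/-- The resolvent `(1 - c I^β)⁻¹` of the Riemann–Liouville integral `I^β` on `C([a, b])`, as its
Neumann series. -/
noncomputable def rlResolvent (c : ℝ) : C(Icc a b, ℝ) →L[ℝ] C(Icc a b, ℝ) :=
  ∑' n : ℕ, (c • rlIntegral hab hβ) ^ n

theorem hasSum_rlIntegral_one_mul_rlResolvent_pow_succ (c : ℝ) (l : ℕ) (g : C(Icc a b, ℝ))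
    (t : Icc a b) :
    HasSum (fun n : ℕ => ((n + l).choose l : ℝ) * c ^ n *
        RLI a (fun _ => 1) (β * n + 1) (g.IccExtend hab) t)
      ((rlIntegral hab one_pos * rlResolvent hab hβ c ^ (l + 1)) g t) := by
  have hsum := hasSum_smul_mul_pow
    (summable_norm_smul_pow hβ (norm_rlIntegral_pow_le hab hβ) c) (rlIntegral hab one_pos) l
  simp only [rlIntegral_mul_pow] at hsum
  exact (hsum.mapL (ContinuousLinearMap.apply ℝ _ g)).mapL (ContinuousMap.evalCLM ℝ t)

end Operator

theorem hasSum_integral_pE_mul {a t β : ℝ} {f : ℝ → ℝ} (hβ : 0 < β) (hat : a ≤ t)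
    (hf : Continuous f) (p m : ℝ) :
    HasSum (fun n : ℕ => (m * Real.log p) ^ n * RLI a (fun _ => 1) (β * n + 1) f t)
      (∫ τ in a..t, pE p β (m * (t - τ) ^ β) * f τ) := by
  obtain ⟨C, hC⟩ := isCompact_Icc.exists_bound_of_continuousOn (s := Icc a t) hf.continuousOn
  have hterm (n : ℕ) (τ : ℝ) (hτ : τ ∈ Icc a t) :
      (m * (t - τ) ^ β * Real.log p) ^ n =
        (m * Real.log p) ^ n * (t - τ) ^ (β * n) := by
    rw [Real.rpow_mul_natCast (sub_nonneg.2 hτ.2)]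
    ring
  set F : ℕ → ℝ → ℝ := fun n τ =>
    (m * (t - τ) ^ β * Real.log p) ^ n / Real.Gamma (β * n + 1) * f τ
  have hbound : Summable fun n : ℕ =>
      (‖m * Real.log p‖ * (t - a) ^ β) ^ n / Real.Gamma (β * n + 1) * C :=
    (summable_pow_div_Gamma hβ _).mul_right C
  have hint (n : ℕ) :
      ∫ τ in a..t, F n τ =
        (m * Real.log p) ^ n * RLI a (fun _ => 1) (β * n + 1) f t := by
    rw [RLI_one_eq, add_sub_cancel_right, ← mul_assoc, ← intervalIntegral.integral_const_mul]
    refine intervalIntegral.integral_congr fun τ hτ => ?_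
    rw [uIcc_of_le hat] at hτ
    simp only [F, hterm n τ hτ]
    ring
  have hpow : Continuous fun τ : ℝ => (t - τ) ^ β :=
    (Real.continuous_rpow_const hβ.le).comp (by fun_prop)
  have hsum := intervalIntegral.hasSum_integral_of_dominated_convergence (μ := volume)
    (a := a) (b := t) (F := F) (f := fun τ => pE p β (m * (t - τ) ^ β) * f τ)
    (fun n _ => (‖m * Real.log p‖ * (t - a) ^ β) ^ n / Real.Gamma (β * n + 1) * C)
    (fun n => (by fun_prop : Continuous (F n)).aestronglyMeasurable)
    (fun n => .of_forall fun τ hτ => ?_) (.of_forall fun _ _ => hbound)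
    intervalIntegrable_const
    (.of_forall fun τ _ => (summable_pow_div_Gamma hβ _).hasSum.mul_right (f τ))
  · simpa only [hint] using hsum
  · rw [uIoc_of_le hat] at hτ
    have hτ' : τ ∈ Icc a t := Ioc_subset_Icc_self hτ
    have hΓ : 0 < Real.Gamma (β * n + 1) := Real.Gamma_pos_of_pos (by positivity)
    have htτ : 0 ≤ t - τ := sub_nonneg.2 hτ.2
    rw [norm_mul, norm_div, norm_pow, Real.norm_of_nonneg hΓ.le, mul_right_comm, norm_mul,
      Real.norm_of_nonneg (Real.rpow_nonneg htτ β)]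
    gcongr
    · exact hτ.1.le
    · exact hC τ hτ'

section PowerDerivative

variable {a b β : ℝ} (hab : a ≤ b) (hβ : 0 < β)

theorem integral_pE_mul_IccExtend (p m : ℝ) (g : C(Icc a b, ℝ)) (t : Icc a b) :
    ∫ τ in a..t, pE p β (m * (t - τ) ^ β) * g.IccExtend hab τ =
      (rlIntegral hab one_pos * rlResolvent hab hβ (m * Real.log p)) g t := by
  have hR := hasSum_rlIntegral_one_mul_rlResolvent_pow_succ hab hβ (m * Real.log p) 0 g t
  simp only [add_zero, Nat.choose_zero_right, Nat.cast_one, one_mul, zero_add, pow_one] at hR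
  exact (hasSum_integral_pE_mul hβ t.2.1 (g.IccExtend hab).continuous p m).unique hR

theorem pD_one_eq_of_eqOn_deriv {h : ℝ → ℝ} {g : C(Icc a b, ℝ)}
    (hh : EqOn (deriv h) (g.IccExtend hab) (Ioo a b)) (α p Nα : ℝ) (t : Icc a b) :
    pD a (fun _ => 1) α β p Nα h t = 1 / ((1 - α) / Nα) *
      (rlIntegral hab one_pos * rlResolvent hab hβ (-(α / (1 - α)) * Real.log p)) g t := by
  simp only [pD, one_mul, mul_one]
  rw [← integral_pE_mul_IccExtend]
  congr 1
  refine intervalIntegral.integral_congr_Ioo_of_le t.2.1 fun τ hτ => ?_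
  simp only [hh (Ioo_subset_Ioo_right t.2.2 hτ)]

theorem eqOn_deriv_of_eq_rlIntegral_one {h : ℝ → ℝ} {g : C(Icc a b, ℝ)}
    (hh : ∀ t : Icc a b, h t = rlIntegral hab one_pos g t) :
    EqOn (deriv h) (g.IccExtend hab) (Ioo a b) := fun s hs => by
  have hloc : h =ᶠ[nhds s] fun t => ∫ τ in a..t, g.IccExtend hab τ := by
    filter_upwards [Ioo_mem_nhds hs.1 hs.2] with t ht
    rw [hh ⟨t, Ioo_subset_Icc_self ht⟩, rlIntegral_apply, RLI_one_one]
  rw [hloc.deriv_eq, (g.IccExtend hab).continuous.deriv_integral]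

theorem iterate_pD_one_eq {h : ℝ → ℝ} {g : C(Icc a b, ℝ)}
    (hh : EqOn (deriv h) (g.IccExtend hab) (Ioo a b)) (α p Nα : ℝ) (l : ℕ) (t : Icc a b) :
    (pD a (fun _ => 1) α β p Nα)^[l + 1] h t = (1 / ((1 - α) / Nα)) ^ (l + 1) *
      (rlIntegral hab one_pos *
        rlResolvent hab hβ (-(α / (1 - α)) * Real.log p) ^ (l + 1)) g t := by
  set k := 1 / ((1 - α) / Nα)
  set R := rlResolvent hab hβ (-(α / (1 - α)) * Real.log p)
  induction l generalizing t with
  | zero =>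
    simpa only [zero_add, pow_one, Function.iterate_one] using
      pD_one_eq_of_eqOn_deriv hab hβ hh α p Nα t
  | succ l ih =>
    have hderiv : EqOn (deriv ((pD a (fun _ => 1) α β p Nα)^[l + 1] h))
        ((k ^ (l + 1) • (R ^ (l + 1)) g).IccExtend hab) (Ioo a b) :=
      eqOn_deriv_of_eq_rlIntegral_one hab fun t => by
        rw [map_smul, ih]; rfl
    rw [Function.iterate_succ_apply', pD_one_eq_of_eqOn_deriv hab hβ hderiv, map_smul]
    simp only [ContinuousMap.smul_apply, smul_eq_mul]
    rw [← mul_assoc, ← pow_succ', ← mul_apply_eq_comp, mul_assoc, ← pow_succ']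

end PowerDerivative

theorem pD_iterate_series_general {a α β p Nα t : ℝ} {f f' : ℝ → ℝ} (_hα : α ≠ 1) (hβ : 0 < β)
    (_hp : 0 < p) (_hN : Nα ≠ 0) {l : ℕ} (hl : 1 ≤ l) (ht : a ≤ t)
    (hf' : ContinuousOn f' (Icc a t)) (hff' : ∀ s ∈ Ioo a t, HasDerivAt f (f' s) s) :
    HasSum (fun q : ℕ => 1 / ((1 - α) / Nα) ^ l *
        (((q + l - 1).choose (l - 1) : ℝ) * (-(α / (1 - α)) * Real.log p) ^ q *
          RLI a (fun _ => 1) (β * q + 1) f' t))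
      ((pD a (fun _ => 1) α β p Nα)^[l] f t) := by
  obtain ⟨l, rfl⟩ := Nat.exists_eq_add_of_le' hl
  set g : C(Icc a t, ℝ) := ⟨_, hf'.domRestrict⟩
  have hg : EqOn (g.IccExtend ht) f' (Icc a t) := fun s hs => IccExtend_of_mem ht g hs
  have hderiv : EqOn (deriv f) (g.IccExtend ht) (Ioo a t) := fun s hs => by
    rw [hg (Ioo_subset_Icc_self hs), (hff' s hs).deriv]
  have hiter := iterate_pD_one_eq ht hβ hderiv α p Nα l ⟨t, right_mem_Icc.2 ht⟩
  have hsum := hasSum_rlIntegral_one_mul_rlResolvent_pow_succ ht hβ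
    (-(α / (1 - α)) * Real.log p) l g ⟨t, right_mem_Icc.2 ht⟩
  simp only [RLI_one_congr ht hg] at hsum
  rw [hiter, one_div_pow]
  exact hsum.mul_left _

/-- Series representation of the `l`-fold power fractional derivative with unit
weight. -/
theorem pD_iterate_series (a α β p Nα : ℝ) (hα0 : 0 < α) (hα1 : α < 1) (hβ : 0 < β)
    (hp : 0 < p) (hN : 0 < Nα) (l : ℕ) (hl : 1 ≤ l) (f : ℝ → ℝ) (hf : ContDiff ℝ (⊤ : ℕ∞) f)
    (t : ℝ) (ht : a ≤ t) :
    (pD a (fun _ => 1) α β p Nα)^[l] f t =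
      (1 / ((1 - α) / Nα) ^ l) *
        ∑' q : ℕ, ((q + l - 1).choose (l - 1) : ℝ) * (-(α / (1 - α)) * Real.log p) ^ q *
          RLI a (fun _ => 1) (β * q + 1) (deriv f) t := by
  rw [← tsum_mul_left]
  exact (pD_iterate_series_general hα1.ne hβ hp hN.ne' hl ht
    (hf.continuous_deriv (by simp)).continuousOn
    fun s _ => (hf.differentiable (by simp) s).hasDerivAt).tsum_eq.symm
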